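/- For every nonnegative integer ℓ, nonnegative integer n, and complex number x such that no denominator vanishes: sum over k from 0 to n of ((3x)_k (-ℓ-3x)_k (-n)_k)/(k! (1/2-ℓ)_k (-3n)_k) * (3/4)^k equals (1/2) * ((1+3x)_ℓ (1/2+3x)_ℓ)/((1+6x)_ℓ (1/2)_ℓ) * sum over i from 0 to ℓ of ((-ℓ)_i (6x)_i)/(i! (1+6x+ℓ)_i) * [ (((1+i)/3+x)_n ((2-i)/3-x)_n)/((1/3)_n (2/3)_n) + (((2+i)/3+x)_n ((1-i)/3-x)_n)/((1/3)_n (2/3)_n) ]. -/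

import Mathlib

/-- Pochhammer symbol (rising factorial) `(a)_k`. -/
noncomputable def poch (a : ℂ) (k : ℕ) : ℂ := ∏ j ∈ Finset.range k, (a + j)

@[simp] lemma poch_zero (a : ℂ) : poch a 0 = 1 := by simp [poch]

lemma poch_succ (a : ℂ) (k : ℕ) : poch a (k + 1) = poch a k * (a + k) := by
  simp [poch, Finset.prod_range_succ]

lemma poch_succ' (a : ℂ) (k : ℕ) : poch a (k + 1) = a * poch (a + 1) k := by
  simp only [poch, Finset.prod_range_succ']
  rw [mul_comm]
  congr 1
  · simp
  · refine Finset.prod_congr rfl fun j _ => ?_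
    push_cast
    ring

lemma poch_add (a : ℂ) (m k : ℕ) : poch a (m + k) = poch a m * poch (a + m) k := by
  simp only [poch, Finset.prod_range_add]
  congr 1
  refine Finset.prod_congr rfl fun j _ => ?_
  push_cast
  ring

lemma mul_poch_add_one (a : ℂ) (k : ℕ) : a * poch (a + 1) k = (a + k) * poch a k := by
  rw [← poch_succ', poch_succ, mul_comm]

lemma poch_ne_zero_iff (a : ℂ) (k : ℕ) : poch a k ≠ 0 ↔ ∀ j < k, a + j ≠ 0 := by
  simp [poch, Finset.prod_ne_zero_iff]

lemma half_sub_ne_zero (p q : ℕ) : (1 / 2 - p + q : ℂ) ≠ 0 := by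
  intro h
  have h' : ((1 + 2 * q : ℕ) : ℂ) = (2 * p : ℕ) := by
    push_cast
    linear_combination 2 * h
  have := Nat.cast_injective h'
  omega

lemma poch_half_sub_ne_zero (p k : ℕ) : poch (1 / 2 - p) k ≠ 0 :=
  (poch_ne_zero_iff _ _).2 fun j _ => half_sub_ne_zero p j

lemma poch_half_ne_zero (k : ℕ) : poch (1 / 2) k ≠ 0 := by
  simpa using poch_half_sub_ne_zero 0 k

lemma poch_neg_natCast_ne_zero {m k : ℕ} (h : k ≤ m) : poch (-(m : ℂ)) k ≠ 0 := by
  refine (poch_ne_zero_iff _ _).2 fun j hj h0 => ?_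
  have : (j : ℂ) = m := by linear_combination h0
  have := Nat.cast_injective this
  omega

/-- The duplication formula for the Pochhammer symbol. -/
lemma poch_duplication (a : ℂ) (m : ℕ) :
    4 ^ m * (poch (1 + a) m * poch (1 / 2 + a) m) = poch (1 + 2 * a) m * poch (1 + 2 * a + m) m := by
  rw [← poch_add]
  induction m with
  | zero => simp
  | succ m ih =>
    rw [show m + 1 + (m + 1) = m + m + 1 + 1 by ring, poch_succ _ (m + m + 1), poch_succ _ (m + m),
      poch_succ _ m, poch_succ _ m, ← ih]
    push_cast
    ring

lemma poch_half_reflection (m k : ℕ) :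
    poch (1 / 2 - m) k * poch (1 / 2 - k) m = poch (1 / 2) m * poch (1 / 2) k := by
  induction m with
  | zero => simp
  | succ m ih =>
    have h := mul_poch_add_one (1 / 2 - (m + 1 : ℂ)) k
    rw [show (1 / 2 - (m + 1 : ℂ)) + 1 = 1 / 2 - m by ring] at h
    rw [poch_succ, poch_succ]
    push_cast
    linear_combination (1 / 2 + m : ℂ) * ih + poch (1 / 2 - k) m * h

/-- The coefficients of the terminating well-poised expansion, cleared of denominators. -/
noncomputable def wellPoisedCoeff (m i : ℕ) (a : ℂ) : ℂ :=
  (-1) ^ i * m.choose i * poch (2 * a) i * poch (1 + 2 * a + m + i) (m - i)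

lemma wellPoisedCoeff_succ_zero (m : ℕ) (a : ℂ) :
    (1 + m + 2 * a) * wellPoisedCoeff (m + 1) 0 a =
      (2 * a + 2 * m + 1) * (2 * a + 2 * m + 2) * wellPoisedCoeff m 0 a := by
  have h := mul_poch_add_one (1 + 2 * a + m) m
  simp only [wellPoisedCoeff, pow_zero, Nat.choose_zero_right, poch_zero, Nat.sub_zero,
    Nat.cast_zero, add_zero, Nat.cast_one, one_mul, poch_succ]
  push_cast
  rw [show 1 + 2 * a + (m + 1 : ℂ) = 1 + 2 * a + m + 1 by ring]
  linear_combination (2 * a + 2 * m + 2) * h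

lemma wellPoisedCoeff_succ_succ (m i : ℕ) (hi : i ≤ m) (a : ℂ) :
    (1 + m + 2 * a) * wellPoisedCoeff (m + 1) (i + 1) a =
      (2 * a + 2 * m + 1) * (2 * a + 2 * m + 2) * wellPoisedCoeff m (i + 1) a
        - 2 * a * (2 * a + 1) * wellPoisedCoeff m i (a + 1) := by
  obtain ⟨d, rfl⟩ := Nat.exists_eq_add_of_le hi
  have hi0 : (i + 1 : ℂ) ≠ 0 := by exact_mod_cast i.succ_ne_zero
  have hc1 : ((i + d + 1).choose (i + 1) : ℂ) * (i + 1) = (i + d + 1) * (i + d).choose i := by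
    exact_mod_cast (Nat.add_one_mul_choose_eq (i + d) i).symm
  have hc2 : ((i + d).choose (i + 1) : ℂ) * (i + 1) = (i + d).choose i * d := by
    have := Nat.choose_succ_right_eq (i + d) i
    rw [Nat.add_sub_cancel_left] at this
    exact_mod_cast this
  have hp : ((i + d).choose (i + 1) : ℂ) *
      ((2 * a + 2 * (i + d) + 1) * (2 * a + 2 * (i + d) + 2) *
        poch (1 + 2 * a + (i + d) + (i + 1)) (d - 1)) =
      (i + d).choose (i + 1) *
        ((2 + 2 * a + 2 * i + d) * poch (3 + 2 * a + 2 * i + d) d) := by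
    rcases d with _ | d
    · simp
    · congr 1
      have h := mul_poch_add_one (2 + 2 * a + 2 * i + (d + 1 : ℂ)) (d + 1)
      rw [poch_succ (2 + 2 * a + 2 * i + (d + 1 : ℂ)) d] at h
      push_cast at h ⊢
      rw [show 1 + 2 * a + (i + (d + 1)) + (i + 1 : ℂ) = 2 + 2 * a + 2 * i + (d + 1) by ring,
        show 3 + 2 * a + 2 * i + (d + 1 : ℂ) = 2 + 2 * a + 2 * i + (d + 1) + 1 by ring]
      linear_combination -h
  have h2 : 2 * a * (2 * a + 1) * poch (2 * (a + 1)) i =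
      poch (2 * a) i * (2 * a + i) * (2 * a + i + 1) := by
    have h := poch_succ' (2 * a) (i + 1)
    rw [poch_succ' _ i, poch_succ, poch_succ] at h
    rw [show 2 * (a + 1) = 2 * a + 1 + 1 by ring]
    push_cast at h
    linear_combination -h
  have e1 : i + d + 1 - (i + 1) = d := by omega
  have e2 : i + d - (i + 1) = d - 1 := by omega
  have e3 : i + d - i = d := by omega
  simp only [wellPoisedCoeff, e1, e2, e3]
  rw [poch_succ]
  push_cast
  rw [show 1 + 2 * a + (i + d + 1) + (i + 1 : ℂ) = 3 + 2 * a + 2 * i + d by ring,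
    show 1 + 2 * (a + 1) + (i + d) + (i : ℂ) = 3 + 2 * a + 2 * i + d by ring]
  refine mul_left_cancel₀ hi0 ?_
  generalize poch (3 + 2 * a + 2 * i + d) d = p at *
  generalize poch (1 + 2 * a + (i + d) + (i + 1)) (d - 1) = q at *
  generalize poch (2 * (a + 1)) i = r at *
  generalize poch (2 * a) i = s at *
  rw [pow_succ]
  generalize ((-1 : ℂ) ^ i) = t at *
  generalize ((i + d + 1).choose (i + 1) : ℂ) = c₁ at *
  generalize ((i + d).choose (i + 1) : ℂ) = c₂ at *
  generalize ((i + d).choose i : ℂ) = c at *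
  linear_combination (-t * s * (2 * a + i) * p * (1 + i + d + 2 * a)) * hc1 +
    (i + 1) * t * s * (2 * a + i) * hp + t * s * (2 * a + i) * (2 + 2 * a + 2 * i + d) * p * hc2
    + (i + 1) * t * c * p * h2

lemma sum_wellPoisedCoeff_succ (f : ℂ → ℂ) (m : ℕ) (a : ℂ) :
    (1 + m + 2 * a) * ∑ i ∈ Finset.range (m + 2), wellPoisedCoeff (m + 1) i a * f (a + i) =
      (2 * a + 2 * m + 1) * (2 * a + 2 * m + 2) *
        ∑ i ∈ Finset.range (m + 1), wellPoisedCoeff m i a * f (a + i)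
      - 2 * a * (2 * a + 1) *
        ∑ i ∈ Finset.range (m + 1), wellPoisedCoeff m i (a + 1) * f (a + 1 + i) := by
  have htop : wellPoisedCoeff m (m + 1) a = 0 := by simp [wellPoisedCoeff]
  have hext : ∑ i ∈ Finset.range (m + 1), wellPoisedCoeff m i a * f (a + i) =
      ∑ i ∈ Finset.range (m + 2), wellPoisedCoeff m i a * f (a + i) := by
    rw [Finset.sum_range_succ _ (m + 1), htop, zero_mul, add_zero]
  rw [hext, Finset.sum_range_succ' _ (m + 1), Finset.sum_range_succ' _ (m + 1), mul_add, mul_add,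
    ← mul_assoc _ (wellPoisedCoeff (m + 1) 0 a), wellPoisedCoeff_succ_zero, add_sub_right_comm,
    ← mul_assoc _ (wellPoisedCoeff m 0 a), Finset.mul_sum, Finset.mul_sum, Finset.mul_sum,
    ← Finset.sum_sub_distrib]
  congr 1
  refine Finset.sum_congr rfl fun i hi => ?_
  have h := wellPoisedCoeff_succ_succ m i (by simpa [Nat.lt_succ_iff] using hi) a
  rw [show a + 1 + (i : ℂ) = a + (i + 1 : ℕ) by push_cast; ring]
  linear_combination f (a + (i + 1 : ℕ)) * h

/-- A terminating very well-poised summation. -/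
lemma sum_wellPoisedCoeff_mul_poch (m k : ℕ) (a : ℂ) (ha : ∀ j < 2 * m, 1 + 2 * a + j ≠ 0) :
    ∑ i ∈ Finset.range (m + 1), wellPoisedCoeff m i a * (poch (a + i) k * poch (-(a + i)) k) =
      4 ^ m * poch (1 / 2 - k) m * poch a k * poch (-m - a) k := by
  induction m generalizing a with
  | zero => simp [wellPoisedCoeff]
  | succ m ih =>
    have h0 : (1 + m + 2 * a) ≠ 0 := by
      have := ha m (by omega)
      rwa [add_right_comm] at this
    refine mul_left_cancel₀ h0 ?_
    rw [sum_wellPoisedCoeff_succ (fun z => poch z k * poch (-z) k), ih a fun j hj => ha j (by omega),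
      ih (a + 1) fun j hj => ?_]
    · have h1 := mul_poch_add_one a k
      have h2 := mul_poch_add_one (-(m + 1) - a) k
      rw [show -(m + 1) - a + 1 = -m - a by ring] at h2
      rw [poch_succ, show -m - (a + 1) = -(m + 1) - a by ring]
      push_cast
      generalize poch (-(m + 1) - a) k = u at *
      generalize poch (-m - a) k = v at *
      generalize poch (a + 1) k = w at *
      generalize poch a k = s at *
      generalize poch (1 / 2 - k) m = t at *
      rw [pow_succ]
      generalize (4 : ℂ) ^ m = c at *
      linear_combination (-2 * (2 * a + 2 * m + 1) * c * t * s) * h2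
        - 2 * (2 * a + 1) * c * t * u * h1
    · have := ha (j + 2) (by omega)
      convert this using 1
      push_cast
      ring

/-- The summand of the strange evaluation in the case of a zero shift. -/
noncomputable def gosperTerm (a : ℂ) (n k : ℕ) : ℂ :=
  (poch a k * poch (-a) k * poch (-(n : ℂ)) k) /
    ((k.factorial : ℂ) * poch (1 / 2) k * poch (-(3 * n : ℂ)) k) * (3 / 4 : ℂ) ^ k

lemma natCast_sub_ne_zero {p q : ℕ} (h : q < p) : (p - q : ℂ) ≠ 0 := by
  rw [sub_ne_zero]
  exact_mod_cast h.ne'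

lemma poch_neg_three_mul_succ_ne_zero {n k : ℕ} (hk : k ≤ 3 * n + 3) :
    poch (-(3 * (n + 1 : ℕ) : ℂ)) k ≠ 0 := by
  have := poch_neg_natCast_ne_zero (m := 3 * (n + 1)) (k := k) (by omega)
  simpa using this

lemma gosperTerm_succ_right (a : ℂ) {n k : ℕ} (hk : k ≤ n) :
    gosperTerm a (n + 1) (k + 1) * (2 * (k + 1) * (2 * k + 1) * (3 * n + 3 - k)) =
      gosperTerm a (n + 1) k * (3 * (n + 1 - k) * (k ^ 2 - a ^ 2)) := by
  have h1 : poch (-(3 * (n + 1 : ℕ) : ℂ)) k ≠ 0 := poch_neg_three_mul_succ_ne_zero (by omega)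
  have h2 := poch_half_ne_zero k
  have h3 : (k.factorial : ℂ) ≠ 0 := by exact_mod_cast k.factorial_ne_zero
  have h4 : (k + 1 : ℂ) ≠ 0 := by exact_mod_cast k.succ_ne_zero
  have h5 : (2 * k + 1 : ℂ) ≠ 0 := by exact_mod_cast (2 * k).succ_ne_zero
  have h6 : (3 * n + 3 - k : ℂ) ≠ 0 := by
    have := natCast_sub_ne_zero (p := 3 * n + 3) (q := k) (by omega)
    exact_mod_cast this
  simp only [gosperTerm, poch_succ, Nat.factorial_succ, Nat.cast_mul, Nat.cast_succ, pow_succ] at *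
  rw [show (1 / 2 + k : ℂ) = (2 * k + 1) / 2 by ring,
    show (-(3 * (n + 1)) + k : ℂ) = -(3 * n + 3 - k) by ring]
  generalize poch (-(3 * (n + 1) : ℂ)) k = v at *
  generalize (3 * n + 3 - k : ℂ) = d at *
  generalize (2 * k + 1 : ℂ) = e at *
  field_simp
  ring

lemma gosperTerm_succ_left (a : ℂ) {n k : ℕ} (hk : k ≤ n) :
    gosperTerm a n k * ((3 * n + 3 - k) * (3 * n + 2 - k) * (3 * n + 1 - k)) =
      gosperTerm a (n + 1) k * (3 * (n + 1 - k) * (3 * n + 1) * (3 * n + 2)) := by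
  have h1 : poch (-(3 * (n + 1 : ℕ) : ℂ)) k ≠ 0 := poch_neg_three_mul_succ_ne_zero (by omega)
  have h1' : poch (-(3 * n : ℂ)) k ≠ 0 := by
    simpa using poch_neg_natCast_ne_zero (m := 3 * n) (k := k) (by omega)
  have h2 := poch_half_ne_zero k
  have h3 : (k.factorial : ℂ) ≠ 0 := by exact_mod_cast k.factorial_ne_zero
  have hn : (n + 1 : ℂ) ≠ 0 := by exact_mod_cast n.succ_ne_zero
  have e1 := mul_poch_add_one (-(n + 1) : ℂ) k
  have e2 := mul_poch_add_one (-(3 * (n + 1)) : ℂ) k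
  have e3 := mul_poch_add_one (-(3 * (n + 1)) + 1 : ℂ) k
  have e4 := mul_poch_add_one (-(3 * (n + 1)) + 1 + 1 : ℂ) k
  rw [show (-(n + 1) + 1 : ℂ) = -n by ring] at e1
  rw [show (-(3 * (n + 1)) + 1 + 1 + 1 : ℂ) = -(3 * n) by ring] at e4
  have e5 : (3 * n + 3) * (3 * n + 2) * (3 * n + 1) * poch (-(3 * n : ℂ)) k =
      (3 * n + 3 - k) * (3 * n + 2 - k) * (3 * n + 1 - k) * poch (-(3 * (n + 1) : ℂ)) k := by
    linear_combination (-(3 * n + 3) * (3 * n + 2)) * e4 - (3 * n + 3) * (3 * n + 1 - k) * e3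
      - (3 * n + 2 - k) * (3 * n + 1 - k) * e2
  push_cast at h1
  have key : poch (-(n : ℂ)) k / poch (-(3 * n : ℂ)) k *
      ((3 * n + 3 - k) * (3 * n + 2 - k) * (3 * n + 1 - k)) =
      poch (-(n + 1 : ℂ)) k / poch (-(3 * (n + 1) : ℂ)) k *
        (3 * (n + 1 - k) * (3 * n + 1) * (3 * n + 2)) := by
    rw [div_mul_eq_mul_div, div_mul_eq_mul_div, div_eq_div_iff h1' h1]
    linear_combination (-poch (-(n : ℂ)) k) * e5 -
      3 * (3 * n + 2) * (3 * n + 1) * poch (-(3 * n : ℂ)) k * e1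
  simp only [gosperTerm, Nat.cast_succ]
  linear_combination (poch a k * poch (-a) k / (k.factorial * poch (1 / 2) k) * (3 / 4) ^ k) * key

/-- The factors in the denominators of both telescoping certificates do not vanish. -/
lemma telescoping_denominators {n k : ℕ} (hk : k ≤ n) :
    (3 * n + 3 - k : ℂ) ≠ 0 ∧ (3 * n + 2 - k : ℂ) ≠ 0 ∧ (3 * n + 1 - k : ℂ) ≠ 0 := by
  have h3 := natCast_sub_ne_zero (p := 3 * n + 3) (q := k) (by omega)
  have h2 := natCast_sub_ne_zero (p := 3 * n + 2) (q := k) (by omega)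
  have h1 := natCast_sub_ne_zero (p := 3 * n + 1) (q := k) (by omega)
  push_cast at h1 h2 h3
  exact ⟨h3, h2, h1⟩

lemma sum_gosperTerm_telescope (a : ℂ) {n m : ℕ} (hm : m ≤ n + 1) :
    ∑ k ∈ Finset.range m, ((n + 1 / 3) * (n + 2 / 3) * gosperTerm a (n + 1) k -
      ((n + 1 / 3) * (n + 2 / 3) - a ^ 2 / 9 - k / 9) * gosperTerm a n k) =
      -(2 * (n + 1 / 3) * (n + 2 / 3) * (m * (2 * m - 1))) /
        ((3 * n + 2 - m) * (3 * n + 3 - m)) * gosperTerm a (n + 1) m := by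
  induction m with
  | zero => simp
  | succ k ih =>
    obtain ⟨h3, h2, h1⟩ := telescoping_denominators (n := n) (k := k) (by omega)
    have hr := gosperTerm_succ_right a (n := n) (k := k) (by omega)
    have hl := gosperTerm_succ_left a (n := n) (k := k) (by omega)
    rw [← eq_div_iff (by simp [h1, h2, h3])] at hl
    rw [← mul_assoc, ← eq_div_iff h3] at hr
    rw [Finset.sum_range_succ, ih (by omega), hl]
    push_cast
    rw [show (3 * n + 2 - (k + 1) : ℂ) = 3 * n + 1 - k by ring,
      show (3 * n + 3 - (k + 1) : ℂ) = 3 * n + 2 - k by ring]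
    trans -((n + 1 / 3) * (n + 2 / 3)) / ((3 * n + 1 - k) * (3 * n + 2 - k)) *
      (gosperTerm a (n + 1) (k + 1) * (2 * (k + 1) * (2 * k + 1)))
    · rw [hr]
      generalize hd₁ : (3 * n + 1 - k : ℂ) = d₁ at *
      generalize hd₂ : (3 * n + 2 - k : ℂ) = d₂ at *
      generalize hd₃ : (3 * n + 3 - k : ℂ) = d₃ at *
      field_simp
      rw [← hd₁, ← hd₂, ← hd₃]
      ring
    · ring

lemma sum_mul_gosperTerm_telescope (a : ℂ) {n m : ℕ} (hm : m ≤ n + 1) :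
    ∑ k ∈ Finset.range m, ((n + 1 / 3) * (n + 2 / 3) * (k * gosperTerm a (n + 1) k) -
      (((n + 1 / 3) * (n + 2 / 3) - a ^ 2 / 9) * k - a ^ 2 / 9) * gosperTerm a n k) =
      -(2 * (n + 1 / 3) * (n + 2 / 3) * (m * (2 * m - 1) * m)) /
        ((3 * n + 2 - m) * (3 * n + 3 - m)) * gosperTerm a (n + 1) m := by
  induction m with
  | zero => simp
  | succ k ih =>
    obtain ⟨h3, h2, h1⟩ := telescoping_denominators (n := n) (k := k) (by omega)
    have hr := gosperTerm_succ_right a (n := n) (k := k) (by omega)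
    have hl := gosperTerm_succ_left a (n := n) (k := k) (by omega)
    rw [← eq_div_iff (by simp [h1, h2, h3])] at hl
    rw [← mul_assoc, ← eq_div_iff h3] at hr
    rw [Finset.sum_range_succ, ih (by omega), hl]
    push_cast
    rw [show (3 * n + 2 - (k + 1) : ℂ) = 3 * n + 1 - k by ring,
      show (3 * n + 3 - (k + 1) : ℂ) = 3 * n + 2 - k by ring]
    trans -((n + 1 / 3) * (n + 2 / 3) * (k + 1)) / ((3 * n + 1 - k) * (3 * n + 2 - k)) *
      (gosperTerm a (n + 1) (k + 1) * (2 * (k + 1) * (2 * k + 1)))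
    · rw [hr]
      generalize hd₁ : (3 * n + 1 - k : ℂ) = d₁ at *
      generalize hd₂ : (3 * n + 2 - k : ℂ) = d₂ at *
      generalize hd₃ : (3 * n + 3 - k : ℂ) = d₃ at *
      field_simp
      rw [← hd₁, ← hd₂, ← hd₃]
      ring
    · ring

lemma sum_gosperTerm_succ (a : ℂ) (n : ℕ) :
    (n + 1 / 3) * (n + 2 / 3) * ∑ k ∈ Finset.range (n + 2), gosperTerm a (n + 1) k =
      ((n + 1 / 3) * (n + 2 / 3) - a ^ 2 / 9) * ∑ k ∈ Finset.range (n + 1), gosperTerm a n k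
        - (∑ k ∈ Finset.range (n + 1), k * gosperTerm a n k) / 9 := by
  have h := sum_gosperTerm_telescope a (le_refl (n + 1))
  have h1 : (2 * n + 1 : ℂ) ≠ 0 := by exact_mod_cast (2 * n).succ_ne_zero
  have h2 : (n + 1 : ℂ) ≠ 0 := by exact_mod_cast n.succ_ne_zero
  have hb : -(2 * (n + 1 / 3) * (n + 2 / 3) * ((n + 1) * (2 * (n + 1) - 1))) /
      ((3 * n + 2 - (n + 1)) * (3 * n + 3 - (n + 1))) = (-(n + 1 / 3) * (n + 2 / 3) : ℂ) := by
    rw [show (3 * n + 2 - (n + 1) : ℂ) = 2 * n + 1 by ring,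
      show (3 * n + 3 - (n + 1) : ℂ) = 2 * (n + 1) by ring, div_eq_iff (by simp [h1, h2])]
    ring
  push_cast at h
  rw [hb, Finset.sum_sub_distrib, ← Finset.mul_sum] at h
  have hs : ∑ k ∈ Finset.range (n + 1),
      ((n + 1 / 3) * (n + 2 / 3) - a ^ 2 / 9 - k / 9) * gosperTerm a n k =
      ((n + 1 / 3) * (n + 2 / 3) - a ^ 2 / 9) * ∑ k ∈ Finset.range (n + 1), gosperTerm a n k
        - (∑ k ∈ Finset.range (n + 1), k * gosperTerm a n k) / 9 := by
    rw [Finset.mul_sum, Finset.sum_div, ← Finset.sum_sub_distrib]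
    exact Finset.sum_congr rfl fun k _ => by ring
  rw [Finset.sum_range_succ]
  linear_combination h + hs

lemma sum_mul_gosperTerm_succ (a : ℂ) (n : ℕ) :
    (n + 1 / 3) * (n + 2 / 3) * ∑ k ∈ Finset.range (n + 2), k * gosperTerm a (n + 1) k =
      ((n + 1 / 3) * (n + 2 / 3) - a ^ 2 / 9) * ∑ k ∈ Finset.range (n + 1), k * gosperTerm a n k
        - a ^ 2 / 9 * ∑ k ∈ Finset.range (n + 1), gosperTerm a n k := by
  have h := sum_mul_gosperTerm_telescope a (le_refl (n + 1))
  have h1 : (2 * n + 1 : ℂ) ≠ 0 := by exact_mod_cast (2 * n).succ_ne_zero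
  have h2 : (n + 1 : ℂ) ≠ 0 := by exact_mod_cast n.succ_ne_zero
  have hb : -(2 * (n + 1 / 3) * (n + 2 / 3) * ((n + 1) * (2 * (n + 1) - 1) * (n + 1))) /
      ((3 * n + 2 - (n + 1)) * (3 * n + 3 - (n + 1))) =
      (-(n + 1 / 3) * (n + 2 / 3) * (n + 1) : ℂ) := by
    rw [show (3 * n + 2 - (n + 1) : ℂ) = 2 * n + 1 by ring,
      show (3 * n + 3 - (n + 1) : ℂ) = 2 * (n + 1) by ring, div_eq_iff (by simp [h1, h2])]
    ring
  push_cast at h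
  rw [hb, Finset.sum_sub_distrib, ← Finset.mul_sum] at h
  have hs : ∑ k ∈ Finset.range (n + 1),
      (((n + 1 / 3) * (n + 2 / 3) - a ^ 2 / 9) * k - a ^ 2 / 9) * gosperTerm a n k =
      ((n + 1 / 3) * (n + 2 / 3) - a ^ 2 / 9) * ∑ k ∈ Finset.range (n + 1), k * gosperTerm a n k
        - a ^ 2 / 9 * ∑ k ∈ Finset.range (n + 1), gosperTerm a n k := by
    rw [Finset.mul_sum, Finset.mul_sum, ← Finset.sum_sub_distrib]
    exact Finset.sum_congr rfl fun k _ => by ring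
  rw [Finset.sum_range_succ]
  push_cast
  linear_combination h + hs

/-- The strange evaluation without shift, together with its companion for the first moment. -/
lemma sum_gosperTerm_and_moment (a : ℂ) (n : ℕ) :
    2 * (poch (1 / 3) n * poch (2 / 3) n) * ∑ k ∈ Finset.range (n + 1), gosperTerm a n k =
        poch (1 / 3 + a / 3) n * poch (2 / 3 - a / 3) n +
          poch (2 / 3 + a / 3) n * poch (1 / 3 - a / 3) n ∧
      2 * (poch (1 / 3) n * poch (2 / 3) n) * ∑ k ∈ Finset.range (n + 1), k * gosperTerm a n k =
        a * (poch (2 / 3 + a / 3) n * poch (1 / 3 - a / 3) n -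
          poch (1 / 3 + a / 3) n * poch (2 / 3 - a / 3) n) := by
  induction n with
  | zero => norm_num [gosperTerm]
  | succ n ih =>
    obtain ⟨ihE, ihM⟩ := ih
    have hE := sum_gosperTerm_succ a n
    have hM := sum_mul_gosperTerm_succ a n
    simp only [poch_succ]
    constructor
    · linear_combination 2 * poch (1 / 3) n * poch (2 / 3) n * hE +
        ((n + 1 / 3) * (n + 2 / 3) - a ^ 2 / 9) * ihE - ihM / 9
    · linear_combination 2 * poch (1 / 3) n * poch (2 / 3) n * hM +
        ((n + 1 / 3) * (n + 2 / 3) - a ^ 2 / 9) * ihM - a ^ 2 / 9 * ihE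

/-- Rewriting a shifted summand through unshifted ones. -/
lemma sum_wellPoisedCoeff_mul_gosperTerm (m n k : ℕ) (a : ℂ)
    (ha : ∀ j < 2 * m, 1 + 2 * a + j ≠ 0) :
    (poch a k * poch (-m - a) k * poch (-(n : ℂ)) k) /
        ((k.factorial : ℂ) * poch (1 / 2 - m) k * poch (-(3 * n : ℂ)) k) * (3 / 4 : ℂ) ^ k =
      1 / (4 ^ m * poch (1 / 2) m) *
        ∑ i ∈ Finset.range (m + 1), wellPoisedCoeff m i a * gosperTerm (a + i) n k := by
  have h := sum_wellPoisedCoeff_mul_poch m k a ha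
  have hr := poch_half_reflection m k
  have h1 := poch_half_ne_zero m
  have h2 := poch_half_ne_zero k
  have h3 := poch_half_sub_ne_zero m k
  have hsum : ∑ i ∈ Finset.range (m + 1), wellPoisedCoeff m i a * gosperTerm (a + i) n k =
      (∑ i ∈ Finset.range (m + 1), wellPoisedCoeff m i a * (poch (a + i) k * poch (-(a + i)) k)) *
        (poch (-(n : ℂ)) k / (k.factorial * poch (1 / 2) k * poch (-(3 * n : ℂ)) k) *
          (3 / 4) ^ k) := by
    rw [Finset.sum_mul]
    exact Finset.sum_congr rfl fun i _ => by rw [gosperTerm]; ring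
  have key : 1 / poch (1 / 2 - m) k = poch (1 / 2 - k) m / (poch (1 / 2) m * poch (1 / 2) k) := by
    rw [div_eq_div_iff h3 (mul_ne_zero h1 h2)]
    linear_combination -hr
  have h4 : (4 : ℂ) ^ m * (1 / 4 ^ m) = 1 := by
    exact mul_one_div_cancel (pow_ne_zero _ (by norm_num))
  rw [hsum, h]
  linear_combination poch a k * poch (-m - a) k * poch (-(n : ℂ)) k /
    (k.factorial * poch (-(3 * n : ℂ)) k) * (3 / 4) ^ k * (key -
      poch (1 / 2 - k) m / (poch (1 / 2) m * poch (1 / 2) k) * h4)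

lemma poch_neg_natCast_eq (m i : ℕ) :
    poch (-(m : ℂ)) i = (-1) ^ i * (i.factorial * m.choose i) := by
  induction i with
  | zero => simp
  | succ i ih =>
    have h : (m.choose (i + 1) * (i + 1) : ℂ) = m.choose i * (m - i) := by
      rcases le_or_gt i m with hi | hi
      · have := Nat.choose_succ_right_eq m i
        rw [← Nat.cast_sub hi]
        exact_mod_cast this
      · simp [Nat.choose_eq_zero_of_lt hi, Nat.choose_eq_zero_of_lt (hi.trans i.lt_succ_self)]
    rw [poch_succ, ih, Nat.factorial_succ]
    push_cast
    linear_combination (-1) ^ i * i.factorial * h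

lemma wellPoisedCoeff_eq (m i : ℕ) (hi : i ≤ m) (a : ℂ)
    (h1 : poch (1 + 2 * a) m ≠ 0) (h2 : poch (1 + 2 * a + m) m ≠ 0) :
    1 / (4 ^ m * poch (1 / 2) m) * wellPoisedCoeff m i a =
      (poch (1 + a) m * poch (1 / 2 + a) m) / (poch (1 + 2 * a) m * poch (1 / 2) m) *
        ((poch (-(m : ℂ)) i * poch (2 * a) i) /
          ((i.factorial : ℂ) * poch (1 + 2 * a + m) i)) := by
  have hd := poch_duplication a m
  have hs := poch_add (1 + 2 * a + m) i (m - i)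
  rw [Nat.add_sub_cancel' hi] at hs
  have h3 : poch (1 + 2 * a + m) i ≠ 0 := fun h => h2 (by rw [hs, h, zero_mul])
  have h4 := poch_half_ne_zero m
  have h5 : (i.factorial : ℂ) ≠ 0 := by exact_mod_cast i.factorial_ne_zero
  rw [wellPoisedCoeff, poch_neg_natCast_eq]
  rw [hs] at hd
  generalize poch (1 / 2 + a) m = p at *
  field_simp
  linear_combination (-m.choose i * poch (2 * a) i) * hd

theorem gosper_related_extension (ℓ n : ℕ) (x : ℂ)
    (h6xℓ : poch (1 + 6*x) ℓ ≠ 0)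
    (hdeni : ∀ i ≤ ℓ, poch (1 + 6*x + ℓ) i ≠ 0)
    (hden : ∀ k ≤ n, poch (1/2 - ℓ) k ≠ 0 ∧ poch (-(3*n : ℂ)) k ≠ 0)
    (hhalf : poch (1/2) ℓ ≠ 0)
    (h13 : poch (1/3) n ≠ 0) (h23 : poch (2/3) n ≠ 0) :
    ∑ k ∈ Finset.range (n+1),
      (poch (3*x) k * poch (-ℓ - 3*x : ℂ) k * poch (-(n : ℂ)) k) /
        ((Nat.factorial k : ℂ) * poch (1/2 - ℓ) k * poch (-(3*n : ℂ)) k) * (3/4 : ℂ)^k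
      = (1/2 : ℂ) * ((poch (1 + 3*x) ℓ * poch (1/2 + 3*x) ℓ) / (poch (1 + 6*x) ℓ * poch (1/2) ℓ)) *
        ∑ i ∈ Finset.range (ℓ+1),
          (poch (-(ℓ : ℂ)) i * poch (6*x) i) / ((Nat.factorial i : ℂ) * poch (1 + 6*x + ℓ) i) *
            ((poch ((1 + i)/3 + x) n * poch ((2 - i)/3 - x) n) /
                (poch (1/3) n * poch (2/3) n)
              + (poch ((2 + i)/3 + x) n * poch ((1 - i)/3 - x) n) /
                (poch (1/3) n * poch (2/3) n)) := by
  have e6 : 6 * x = 2 * (3 * x) := by ring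
  have hℓ := hdeni ℓ le_rfl
  rw [e6] at h6xℓ hℓ ⊢
  have ha : ∀ j < 2 * ℓ, 1 + 2 * (3 * x) + j ≠ 0 := by
    rw [← poch_ne_zero_iff, two_mul ℓ, poch_add]
    exact mul_ne_zero h6xℓ hℓ
  simp_rw [sum_wellPoisedCoeff_mul_gosperTerm ℓ n _ (3 * x) ha]
  rw [← Finset.mul_sum, Finset.sum_comm, Finset.mul_sum, Finset.mul_sum]
  refine Finset.sum_congr rfl fun i hi => ?_
  have hE := (sum_gosperTerm_and_moment (3 * x + i) n).1
  rw [mul_comm, ← eq_div_iff (mul_ne_zero two_ne_zero (mul_ne_zero h13 h23))] at hE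
  rw [← Finset.mul_sum, ← mul_assoc,
    wellPoisedCoeff_eq ℓ i (by simpa [Nat.lt_succ_iff] using hi) (3 * x) h6xℓ hℓ, hE,
    show 1 / 3 + (3 * x + i) / 3 = (1 + i) / 3 + x by ring,
    show 2 / 3 - (3 * x + i) / 3 = (2 - i) / 3 - x by ring,
    show 2 / 3 + (3 * x + i) / 3 = (2 + i) / 3 + x by ring,
    show 1 / 3 - (3 * x + i) / 3 = (1 - i) / 3 - x by ring]
  ring
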